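/- arXiv:2510.16912 — 2 statements merged into one kernel-verified Lean document; each statement's English description precedes it below -/
import Mathlib

section
/- Let d ≥ 2 be an integer and m a positive integer with gcd(m,d) = 1, and set r = m/d ∈ ℚ. Then for every integer E ≥ 1, the alternating sum Σ_{k=0}^{E−1} (−1)^k · C(r,k) is a nonzero rational number; equivalently, V_{r,E}(−1) ≠ 0. -/
open Polynomial Finset

/-- The generalized binomial coefficient `C(r, k) = r (r-1) ⋯ (r-k+1) / k!` for `r : ℚ`. -/
def genBinom (r : ℚ) (k : ℕ) : ℚ :=
  (∏ i ∈ Finset.range k, (r - i)) / (Nat.factorial k)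

/-- The truncated binomial polynomial `V_{r,E}(x) = Σ_{k=0}^{E-1} C(r,k) x^k ∈ ℚ[x]`. -/
noncomputable def truncBinom (r : ℚ) (E : ℕ) : Polynomial ℚ :=
  ∑ k ∈ Finset.range E, Polynomial.C (genBinom r k) * Polynomial.X ^ k

/-!
By Pascal's rule the alternating sum telescopes to `(-1) ^ (E - 1) * C(r - 1, E - 1)`, and
`(E - 1)! * C(r - 1, E - 1)` is the product of the factors `r - 1, r - 2, …, r - (E - 1)`. It
vanishes only if `r` is one of the integers `1, …, E - 1`, whereas a reduced fraction `m / d` with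
`d ≥ 2` is not an integer.
-/

theorem sum_range_succ_neg_one_pow_mul_choose {R : Type*} [Ring R] [BinomialRing R]
    (r : R) (n : ℕ) :
    ∑ k ∈ range (n + 1), (-1) ^ k * Ring.choose r k = (-1) ^ n * Ring.choose (r - 1) n := by
  induction n with
  | zero => simp
  | succ n ih =>
    have pascal : Ring.choose r (n + 1) = Ring.choose (r - 1) n + Ring.choose (r - 1) (n + 1) := by
      simpa only [sub_add_cancel] using Ring.choose_succ_succ (r - 1) n
    rw [sum_range_succ, ih, pascal, pow_succ]
    noncomm_ring

section CommRing

variable {R : Type*} [CommRing R] [BinomialRing R]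

theorem factorial_mul_choose_eq_prod_range (r : R) (n : ℕ) :
    (n.factorial : R) * Ring.choose r n = ∏ i ∈ range n, (r - i) := by
  rw [← nsmul_eq_mul, ← Ring.descPochhammer_eq_factorial_smul_choose,
    ← descPochhammer_eval_eq_prod_range, ← descPochhammer_map (Int.castRingHom R), eval_map,
    ← eval₂_smulOneHom_eq_smeval, RingHom.ext_int RingHom.smulOneHom (Int.castRingHom R)]

theorem choose_eq_zero_iff_exists_natCast_eq [IsDomain R] {r : R} {n : ℕ} :
    Ring.choose r n = 0 ↔ ∃ i < n, r = i := by
  have : IsAddTorsionFree R := BinomialRing.toIsAddTorsionFree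
  rw [← nsmul_eq_zero_iff_right n.factorial_ne_zero, nsmul_eq_mul,
    factorial_mul_choose_eq_prod_range]
  simp only [prod_eq_zero_iff, mem_range, sub_eq_zero]

theorem sum_range_succ_neg_one_pow_mul_choose_eq_zero_iff [IsDomain R] {r : R} {n : ℕ} :
    ∑ k ∈ range (n + 1), (-1) ^ k * Ring.choose r k = 0 ↔ ∃ i < n, r = (i + 1 : ℕ) := by
  rw [sum_range_succ_neg_one_pow_mul_choose, (isUnit_neg_one.pow n).mul_right_eq_zero,
    choose_eq_zero_iff_exists_natCast_eq]
  simp only [sub_eq_iff_eq_add, Nat.cast_succ]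

end CommRing

theorem genBinom_eq_choose (r : ℚ) (k : ℕ) : genBinom r k = Ring.choose r k := by
  rw [genBinom, ← factorial_mul_choose_eq_prod_range,
    mul_div_cancel_left₀ _ (Nat.cast_ne_zero.mpr k.factorial_ne_zero)]

theorem eval_truncBinom (r x : ℚ) (E : ℕ) :
    (truncBinom r E).eval x = ∑ k ∈ range E, x ^ k * genBinom r k := by
  simp only [truncBinom, eval_finsetSum, eval_mul, eval_pow, eval_C, eval_X, mul_comm]

theorem natCast_div_natCast_ne_natCast {m d : ℕ} (hcop : m.Coprime d) (hd : 1 < d) (n : ℕ) :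
    (m : ℚ) / d ≠ n := by
  intro h
  have den_eq_one : ((m : ℚ) / d).den = 1 := by rw [h, Rat.den_natCast]
  have hdvd : d ∣ m := (Rat.den_div_natCast_eq_one_iff m d (by lia)).mp den_eq_one
  exact hd.ne' (Nat.Coprime.eq_one_of_dvd hcop.symm hdvd)

theorem stmt9_general {r : ℚ} {E : ℕ} (hE : 1 ≤ E) (hr : ∀ n ∈ Ioo 0 E, r ≠ n) :
    (∑ k ∈ range E, (-1) ^ k * genBinom r k) ≠ 0 ∧ (truncBinom r E).eval (-1) ≠ 0 := by
  rw [eval_truncBinom, and_self]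
  obtain ⟨n, rfl⟩ := Nat.exists_eq_add_of_le' hE
  simp only [genBinom_eq_choose]
  rw [Ne, sum_range_succ_neg_one_pow_mul_choose_eq_zero_iff]
  rintro ⟨i, hi, rfl⟩
  exact hr (i + 1) (mem_Ioo.mpr ⟨i.succ_pos, Nat.succ_lt_succ hi⟩) rfl

/-- Let `d ≥ 2` and `m > 0` with `gcd(m,d) = 1`, and set `r = m/d`. Then for
every integer `E ≥ 1` the alternating sum `Σ_{k=0}^{E-1} (-1)^k C(r,k)` is nonzero;
equivalently `V_{r,E}(-1) ≠ 0`. -/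
theorem stmt9 (d m : ℕ) (hd : 2 ≤ d) (hm : 0 < m) (hcop : Nat.Coprime m d) :
    ∀ E : ℕ, 1 ≤ E →
      (∑ k ∈ Finset.range E, (-1 : ℚ) ^ k * genBinom ((m : ℚ) / d) k) ≠ 0 ∧
      (truncBinom ((m : ℚ) / d) E).eval (-1) ≠ 0 := by
  intro E hE
  exact stmt9_general hE fun n _ => natCast_div_natCast_ne_natCast hcop hd n
end

section
/- Let p be a prime, d ≥ 2 an integer divisible by p, and m a positive integer not divisible by p. Set r = m/d ∈ ℚ. Then for every integer k ≥ 1, the p-adic valuation of the generalized binomial coefficient C(r,k) equals −k·v_p(d) − v_p(k!), where v_p denotes p-adic valuation. In particular, v_p(C(r,k)) is negative and strictly decreasing as a function of k ≥ 1. -/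
open Polynomial Finset

/-!
If `v_p(r) < 0`, then subtracting a natural number `i` does not change the valuation, because
`v_p(r) < 0 ≤ v_p(i)`. Hence each step `C(r, k + 1) = C(r, k) · (r - k) / (k + 1)` changes the
valuation by `v_p(r) - v_p(k + 1) < 0`, and summing these changes from `C(r, 0) = 1` gives
`v_p(C(r, k)) = k · v_p(r) - v_p(k!)`. The fraction `m / d` has `v_p(m / d) = -v_p(d) < 0`.
-/

theorem genBinom_zero (r : ℚ) : genBinom r 0 = 1 := by
  simp [genBinom]

theorem genBinom_succ (r : ℚ) (k : ℕ) :
    genBinom r (k + 1) = genBinom r k * ((r - k) / (k + 1 : ℕ)) := by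
  rw [genBinom, genBinom, prod_range_succ, Nat.factorial_succ, Nat.cast_mul,
    mul_comm ((k + 1 : ℕ) : ℚ), mul_div_mul_comm]

theorem genBinom_ne_zero {r : ℚ} {k : ℕ} (hr : ∀ i < k, r ≠ i) : genBinom r k ≠ 0 :=
  div_ne_zero (prod_ne_zero_iff.2 fun i hi => sub_ne_zero.2 (hr i (mem_range.1 hi)))
    (Nat.cast_ne_zero.2 k.factorial_ne_zero)

theorem ne_natCast_of_padicValRat_neg {p : ℕ} {r : ℚ} (hr : padicValRat p r < 0) (n : ℕ) :
    r ≠ n := by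
  rintro rfl
  exact hr.not_ge (zero_le_padicValRat_of_nat n)

section Valuation

variable {p : ℕ} [Fact p.Prime]

theorem padicValRat_sub_eq_left_of_neg_of_nonneg {q r : ℚ} (hq : padicValRat p q < 0)
    (hr : 0 ≤ padicValRat p r) : padicValRat p (q - r) = padicValRat p q := by
  obtain rfl | hr0 := eq_or_ne r 0
  · rw [sub_zero]
  have hq0 : q ≠ 0 := by
    rintro rfl
    exact hq.ne padicValRat.zero
  have hqr : q - r ≠ 0 := by
    rw [sub_ne_zero]
    rintro rfl
    exact hq.not_ge hr
  rw [sub_eq_add_neg] at hqr ⊢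
  refine padicValRat.add_eq_of_lt hqr hq0 (neg_ne_zero.2 hr0) ?_
  rw [padicValRat.neg]
  exact hq.trans_le hr

theorem padicValRat_genBinom_succ {r : ℚ} (hr : padicValRat p r < 0) (k : ℕ) :
    padicValRat p (genBinom r (k + 1)) =
      padicValRat p (genBinom r k) + (padicValRat p r - padicValNat p (k + 1)) := by
  have hne : ∀ i : ℕ, r ≠ i := ne_natCast_of_padicValRat_neg hr
  have hnum : r - k ≠ 0 := sub_ne_zero.2 (hne k)
  have hden : ((k + 1 : ℕ) : ℚ) ≠ 0 := Nat.cast_ne_zero.2 k.succ_ne_zero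
  rw [genBinom_succ, padicValRat.mul (genBinom_ne_zero fun i _ => hne i) (div_ne_zero hnum hden),
    padicValRat.div hnum hden,
    padicValRat_sub_eq_left_of_neg_of_nonneg hr (zero_le_padicValRat_of_nat k), padicValRat.of_nat]

theorem padicValRat_genBinom {r : ℚ} (hr : padicValRat p r < 0) (k : ℕ) :
    padicValRat p (genBinom r k) = k * padicValRat p r - padicValNat p k.factorial := by
  induction k with
  | zero => simp [genBinom_zero]
  | succ k ih =>
    rw [padicValRat_genBinom_succ hr, ih, Nat.factorial_succ,
      padicValNat.mul k.succ_ne_zero k.factorial_ne_zero]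
    push_cast
    ring

theorem strictAnti_padicValRat_genBinom {r : ℚ} (hr : padicValRat p r < 0) :
    StrictAnti fun k => padicValRat p (genBinom r k) := by
  refine strictAnti_nat_of_succ_lt fun k => ?_
  rw [padicValRat_genBinom_succ hr]
  lia

theorem padicValRat_genBinom_neg {r : ℚ} (hr : padicValRat p r < 0) {k : ℕ} (hk : 1 ≤ k) :
    padicValRat p (genBinom r k) < 0 :=
  calc
    padicValRat p (genBinom r k) < padicValRat p (genBinom r 0) :=
      strictAnti_padicValRat_genBinom hr hk
    _ = 0 := by rw [genBinom_zero, padicValRat.one]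

theorem padicValRat_natCast_div_of_not_dvd {m : ℕ} (hpm : ¬ p ∣ m) (d : ℕ) :
    padicValRat p ((m : ℚ) / d) = -(padicValNat p d : ℤ) := by
  obtain rfl | hd := eq_or_ne d 0
  · simp
  have hm : m ≠ 0 := by
    rintro rfl
    exact hpm (dvd_zero p)
  rw [padicValRat.div (Nat.cast_ne_zero.2 hm) (Nat.cast_ne_zero.2 hd), padicValRat.of_nat,
    padicValRat.of_nat, padicValNat.eq_zero_of_not_dvd hpm, Nat.cast_zero, zero_sub]

theorem padicValRat_natCast_div_neg {m d : ℕ} (hd : d ≠ 0) (hpd : p ∣ d) (hpm : ¬ p ∣ m) :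
    padicValRat p ((m : ℚ) / d) < 0 := by
  have hv : 1 ≤ padicValNat p d := one_le_padicValNat_of_dvd hd hpd
  rw [padicValRat_natCast_div_of_not_dvd hpm]
  lia

theorem stmt10_general {r : ℚ} (hr : padicValRat p r < 0) :
    (∀ k : ℕ, padicValRat p (genBinom r k) =
      k * padicValRat p r - padicValNat p k.factorial) ∧
    (∀ k : ℕ, 1 ≤ k → padicValRat p (genBinom r k) < 0) ∧
    StrictAnti fun k => padicValRat p (genBinom r k) :=
  ⟨padicValRat_genBinom hr, fun _ => padicValRat_genBinom_neg hr,
    strictAnti_padicValRat_genBinom hr⟩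

end Valuation

/-- Let `p` be prime, `d ≥ 2` divisible by `p`, `m > 0` not divisible by
`p`, and `r = m/d`. For every `k ≥ 1`, `v_p(C(r,k)) = -k·v_p(d) - v_p(k!)`; in particular
`v_p(C(r,k))` is negative and strictly decreasing in `k ≥ 1`. -/
theorem stmt10 (p d m : ℕ) (hp : p.Prime) (hd : 2 ≤ d) (hpd : p ∣ d)
    (hm : 0 < m) (hpm : ¬ p ∣ m) :
    ∀ k : ℕ, 1 ≤ k →
      padicValRat p (genBinom ((m : ℚ) / d) k)
        = -(k : ℤ) * (padicValNat p d : ℤ) - (padicValNat p (Nat.factorial k) : ℤ) ∧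
      padicValRat p (genBinom ((m : ℚ) / d) k) < 0 ∧
      padicValRat p (genBinom ((m : ℚ) / d) (k + 1))
        < padicValRat p (genBinom ((m : ℚ) / d) k) := by
  have : Fact p.Prime := ⟨hp⟩
  obtain ⟨hval, hneg, hanti⟩ :=
    stmt10_general (padicValRat_natCast_div_neg (by lia) hpd hpm)
  refine fun k hk => ⟨?_, hneg k hk, hanti k.lt_succ_self⟩
  rw [hval, padicValRat_natCast_div_of_not_dvd hpm, mul_neg, neg_mul]
end
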